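/- arXiv:1801.05919 — 2 statements merged into one kernel-verified Lean document; each statement's English description precedes it below -/
import Mathlib

section
/- Construction-B burst-erasure recovery in the case δ < B − N (Appendix A): Let C be a Construction-B code with parameters N, B, T satisfying δ < B − N, with n = B+T−N+1 and k = T−N+1, and let Δ_i = min(i+T, n−1). Then for every i ∈ {0,…,n−1} and every interval [u,v] ⊆ {0,…,n−1} with v − u + 1 ≤ B, the i-th coordinate of C is recoverable from {0,…,Δ_i} \ [u,v]; that is, C corrects any erasure burst of length at most B with decoding delay at most T. -/
/-! The code is linear, so by duality coordinate `i` is recoverable from `I` as soon as every codeword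
vanishing on `I` vanishes at `i` (`recoverable_of_zero`). Only the case `u ≤ i ≤ v` matters.

If `i < B - N`, only coordinates up to `T + i` are available and the parity relations alone suffice
(`early_symbol_zero`): the `i`-th parity isolates `c_i`, after the erased part of the incomplete
last block, present only when `a = 1`, has been found from earlier parities through a Cauchy
system.

If `i ≥ B - N`, all unerased coordinates are available. Every coordinate is a value `F (φ_j)` of the
linearized polynomial `F` of the message, a `K`-linear map, at a point `φ_j` (`evalPoint`) in the
`K`-span of the `θ`'s. A nonzero linearized polynomial of this kind has at most
`q ^ (T - N)` zeros, so it suffices that the unerased `φ_j` span a `K`-space of dimension at least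
`T - N + 1` (`unerased_finrank`). As the `θ`'s span dimension `T + 1`, this amounts to saying that
`N` further points complete the unerased ones to a spanning family; dually, a sequence satisfying
the parity relations and supported on a burst of length `B` is determined by `N` of its entries
(`burst_deficiency`). That statement is elementary: either the burst lies in the data part and
meets every residue class modulo `B` once, or it reaches into the parities and the surviving
parities form a triangular system with an identity block and a Cauchy block, or it reaches
`c_{n-1}` and then contains only `N - 1` data entries.
-/

open Finset

/-- For a set `C` of (ℕ-indexed) codewords over `L`, coordinate `i` is recoverable from the
finite coordinate set `I`: there exist scalars `λ_j` with `c_i = ∑_{j ∈ I} λ_j c_j` for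
every `c ∈ C`. -/
def RecoverableFrom {L : Type*} [Field L] (C : Set (ℕ → L)) (i : ℕ) (I : Finset ℕ) : Prop :=
  ∃ lam : ℕ → L, ∀ c ∈ C, c i = ∑ j ∈ I, lam j * c j

/-- The Construction-B code with parameters `N, B, T` where `T = aB + δ`, `1 ≤ δ ≤ B`,
`δ' = min δ (B - N)`, over `L ⊇ K = F_q` with `q = p^e`. The message `m ∈ L^k`,
`k = T - N + 1`, is encoded via the linearized polynomial `f(x) = ∑ m_i x^{q^i}` evaluated
at points `θ_0, …, θ_T` (linearly independent over `K`):
`c_j = f(θ_j)` for `0 ≤ j ≤ T-1`; `c_{n-1} = f(θ_T)` with `n = B + T - N + 1`;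
`c_{T+j} = c_j + c_{j+B} + ⋯ + c_{j+aB}` for `0 ≤ j ≤ δ'-1`; and
`c_{T+j} = c_j + c_{B+j} + ⋯ + c_{(a-1)B+j} + ∑_{ℓ<δ} γ_{j,ℓ} c_{aB+ℓ}` for
`δ' ≤ j ≤ B-N-1`, where `γ_{j,ℓ} = (x_j - y_ℓ)⁻¹` is a Cauchy matrix over `K`. -/
def ConstructionB {L : Type*} [Field L] (N B T a δ q : ℕ) (θ : ℕ → L)
    (x y : ℕ → L) : Set (ℕ → L) :=
  { c : ℕ → L | ∃ m : Fin (T - N + 1) → L,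
      (∀ j < T, c j = ∑ i, m i * θ j ^ q ^ (i : ℕ)) ∧
      (c (B + T - N) = ∑ i, m i * θ T ^ q ^ (i : ℕ)) ∧
      (∀ j < min δ (B - N),
        c (T + j) = ∑ ℓ ∈ Finset.range (a + 1), c (j + ℓ * B)) ∧
      (∀ j, min δ (B - N) ≤ j → j < B - N →
        c (T + j) = (∑ ℓ ∈ Finset.range a, c (j + ℓ * B)) +
          ∑ ℓ ∈ Finset.range δ, (x j - y ℓ)⁻¹ * c (a * B + ℓ)) }

/-! ### Parity relations and Cauchy systems -/

/-- The `B - N` parity relations of the code in the case `δ < B - N` (so that `δ' = δ`), for an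
arbitrary sequence `g`. They hold for codewords, and also for the sequence of evaluation points and
its images under `K`-linear functionals. -/
def ParityRel {L : Type*} [Field L] (N B T a δ : ℕ) (x y g : ℕ → L) : Prop :=
  (∀ j < δ, g (T + j) = ∑ ℓ ∈ range (a + 1), g (j + ℓ * B)) ∧
  (∀ j, δ ≤ j → j < B - N →
    g (T + j) = (∑ ℓ ∈ range a, g (j + ℓ * B)) +
      ∑ ℓ ∈ range δ, (x j - y ℓ)⁻¹ * g (a * B + ℓ))

/-- Invertibility of Cauchy matrices: if `|S| ≤ |R|`, the rows `R` of the Cauchy matrix determine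
a vector supported on the columns `S`. After clearing denominators the vector is the list
of coefficients of a polynomial of degree `< |S|` in the Lagrange-type basis
`∏_{ℓ' ≠ ℓ} (X - y_ℓ')`, and it vanishes at every `x_j`, `j ∈ R`. -/
lemma cauchy_kernel {L : Type*} [Field L] (R S : Finset ℕ) (x y z : ℕ → L)
    (hcard : S.card ≤ R.card)
    (hx : ∀ j ∈ R, ∀ j' ∈ R, j ≠ j' → x j ≠ x j')
    (hy : ∀ j ∈ S, ∀ j' ∈ S, j ≠ j' → y j ≠ y j')
    (hxy : ∀ j ∈ R, ∀ ℓ ∈ S, x j ≠ y ℓ)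
    (hz : ∀ j ∈ R, ∑ ℓ ∈ S, (x j - y ℓ)⁻¹ * z ℓ = 0) :
    ∀ ℓ ∈ S, z ℓ = 0 := by
  classical
  intro ℓ hℓ
  let P : Polynomial L := ∑ s ∈ S, Polynomial.C (z s) *
    ∏ t ∈ S.erase s, (Polynomial.X - Polynomial.C (y t))
  have hPdeg : P.degree < R.card := by
    have h1 : P.degree < (S.card : ℕ) := by
      refine (Polynomial.degree_sum_le _ _).trans_lt ?_
      rw [Finset.sup_lt_iff (WithBot.bot_lt_coe _)]
      intro s hs
      rw [← Polynomial.smul_eq_C_mul]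
      refine (Polynomial.degree_smul_le _ _).trans_lt ?_
      rw [Polynomial.degree_prod]
      simp only [Polynomial.degree_X_sub_C, sum_const, nsmul_eq_mul, mul_one]
      have := Finset.card_erase_lt_of_mem hs
      exact_mod_cast this
    exact h1.trans_le (by exact_mod_cast hcard)
  have hP : P = 0 := by
    refine Polynomial.eq_zero_of_degree_lt_of_eval_index_eq_zero (v := x) (s := R) ?_ hPdeg ?_
    · intro j hj j' hj' h
      by_contra hne
      exact hx j hj j' hj' hne h
    · intro j hj
      have h2 : P.eval (x j) =
          (∏ t ∈ S, (x j - y t)) * ∑ s ∈ S, (x j - y s)⁻¹ * z s := by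
        simp only [P, Polynomial.eval_finsetSum, Polynomial.eval_mul, Polynomial.eval_C,
          Polynomial.eval_prod, Polynomial.eval_sub, Polynomial.eval_X]
        rw [Finset.mul_sum]
        refine Finset.sum_congr rfl fun s hs => ?_
        rw [← Finset.mul_prod_erase S _ hs]
        have : x j - y s ≠ 0 := sub_ne_zero.2 (hxy j hj s hs)
        field_simp
      rw [h2, hz j hj, mul_zero]
  have h3 : P.eval (y ℓ) = z ℓ * ∏ t ∈ S.erase ℓ, (y ℓ - y t) := by
    simp only [P, Polynomial.eval_finsetSum, Polynomial.eval_mul, Polynomial.eval_C,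
      Polynomial.eval_prod, Polynomial.eval_sub, Polynomial.eval_X]
    refine Finset.sum_eq_single_of_mem ℓ hℓ fun s hs hne => ?_
    rw [Finset.prod_eq_zero (i := ℓ) (mem_erase.2 ⟨hne.symm, hℓ⟩) (sub_self _), mul_zero]
  rw [hP, Polynomial.eval_zero] at h3
  rcases mul_eq_zero.1 h3.symm with h | h
  · exact h
  · obtain ⟨t, ht, h⟩ := Finset.prod_eq_zero_iff.1 h
    rw [mem_erase] at ht
    exact absurd (sub_eq_zero.1 h) (hy ℓ hℓ t ht.2 (Ne.symm ht.1))

/-- `cauchy_kernel` for a vector on `{0, …, δ-1}` vanishing outside the columns `S`, with rows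
taken from `{δ, …, M-1}`. -/
lemma cauchy_range {L : Type*} [Field L] (δ M : ℕ) (R S : Finset ℕ) (x y z : ℕ → L)
    (hcard : S.card ≤ R.card) (hR : R ⊆ Ico δ M)
    (hx : ∀ j ∈ Ico δ M, ∀ j' ∈ Ico δ M, j ≠ j' → x j ≠ x j')
    (hy : ∀ ℓ ∈ range δ, ∀ ℓ' ∈ range δ, ℓ ≠ ℓ' → y ℓ ≠ y ℓ')
    (hxy : ∀ j ∈ Ico δ M, ∀ ℓ ∈ range δ, x j ≠ y ℓ)
    (hS : S ⊆ range δ) (hout : ∀ ℓ < δ, ℓ ∉ S → z ℓ = 0)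
    (hz : ∀ j ∈ R, ∑ ℓ ∈ range δ, (x j - y ℓ)⁻¹ * z ℓ = 0) :
    ∀ ℓ < δ, z ℓ = 0 := by
  intro ℓ hℓ
  by_cases hmem : ℓ ∈ S
  · refine cauchy_kernel R S x y z hcard (fun j hj j' hj' => hx j (hR hj) j' (hR hj'))
      (fun j hj j' hj' => hy j (hS hj) j' (hS hj')) (fun j hj l hl => hxy j (hR hj) l (hS hl))
      (fun j hj => ?_) ℓ hmem
    rw [← hz j hj]
    refine Finset.sum_subset hS fun l hl hl' => ?_
    rw [hout l (mem_range.1 hl) hl', mul_zero]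
  · exact hout ℓ hℓ hmem

lemma block_le {a B ℓ : ℕ} (h : ℓ < a) : ℓ * B + B ≤ a * B := by
  have := Nat.mul_le_mul_right B (Nat.succ_le_of_lt h)
  rwa [Nat.succ_mul] at this

/-! ### Sequences supported on a burst -/

/-- Decoding with delay: an erased coordinate `i < B - N` of a sequence satisfying the parity
relations is determined by the unerased coordinates up to `T + i`. -/
lemma early_symbol_zero {L : Type*} [Field L] {N B T a δ : ℕ} (x y g : ℕ → L)
    (hN : 1 ≤ N) (hδ1 : 1 ≤ δ) (hT : T = a * B + δ) (ha : 1 ≤ a)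
    (hx : ∀ j ∈ Ico δ (B - N), ∀ j' ∈ Ico δ (B - N), j ≠ j' → x j ≠ x j')
    (hy : ∀ ℓ ∈ range δ, ∀ ℓ' ∈ range δ, ℓ ≠ ℓ' → y ℓ ≠ y ℓ')
    (hxy : ∀ j ∈ Ico δ (B - N), ∀ ℓ ∈ range δ, x j ≠ y ℓ)
    (hg : ParityRel N B T a δ x y g) {i u v : ℕ} (hi : i < B - N)
    (hui : u ≤ i) (hiv : i ≤ v) (hvu : v < u + B)
    (h0 : ∀ j ≤ T + i, j < u ∨ v < j → g j = 0) : g i = 0 := by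
  have haB : B ≤ a * B := Nat.le_mul_of_pos_left B ha
  have hsum : ∑ ℓ ∈ range a, g (i + ℓ * B) = g i := by
    rw [Finset.sum_eq_single_of_mem 0 (mem_range.2 ha)]
    · simp
    · intro ℓ hℓ hne
      have h1 : B ≤ ℓ * B := Nat.le_mul_of_pos_left B (Nat.pos_of_ne_zero hne)
      have h2 := block_le (B := B) (mem_range.1 hℓ)
      exact h0 _ (by omega) (by omega)
  have hpar : g (T + i) = 0 := h0 _ le_rfl (by omega)
  by_cases hiδ : i < δ
  · have h := hg.1 i hiδ
    rw [hpar, Finset.sum_eq_single_of_mem 0 (mem_range.2 (Nat.succ_pos a))] at h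
    · simpa using h.symm
    · intro ℓ hℓ hne
      have h1 : B ≤ ℓ * B := Nat.le_mul_of_pos_left B (Nat.pos_of_ne_zero hne)
      have h2 : ℓ * B ≤ a * B := Nat.mul_le_mul_right B (Nat.lt_succ_iff.1 (mem_range.1 hℓ))
      exact h0 _ (by omega) (by omega)
  · push Not at hiδ
    have htail : ∀ ℓ < δ, g (a * B + ℓ) = 0 := by
      by_cases hva : v < a * B
      · exact fun ℓ hℓ => h0 _ (by omega) (by omega)
      · have ha2 : a < 2 := by
          -- The burst starts before `B`, so it cannot reach position `a * B` unless `a = 1`.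
          by_contra hne
          have h2 : 2 * B ≤ a * B := Nat.mul_le_mul_right B (by omega)
          omega
        -- The erased part of the last block is recovered from the parities `v + 1 - T ≤ j < u`.
        obtain rfl : a = 1 := by omega
        rw [one_mul] at *
        have hdirect : ∀ j < δ, v + 1 ≤ T + j → j < u → g (B + j) = 0 := by
          intro j hj hj1 hj2
          have h := hg.1 j hj
          rw [Finset.sum_range_succ, Finset.sum_range_one, h0 (T + j) (by omega) (by omega),
            zero_mul, add_zero, one_mul, h0 j (by omega) (by omega), zero_add, add_comm] at h
          exact h.symm
        refine cauchy_range δ (B - N) (Ico (max δ (v + 1 - T)) (v + 1 - B))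
          (range (min δ (v + 1 - T))) x y (fun ℓ => g (B + ℓ)) ?_ ?_ hx hy hxy ?_ ?_ ?_
        · rw [card_range, Nat.card_Ico]; omega
        · intro j hj; rw [mem_Ico] at *; omega
        · intro j hj; rw [mem_range] at *; omega
        · intro ℓ hℓ hn
          rw [mem_range] at hn
          by_cases hv : v < B + ℓ
          · exact h0 _ (by omega) (by omega)
          · exact hdirect ℓ hℓ (by omega) (by omega)
        · intro j hj
          rw [mem_Ico] at hj
          have h := hg.2 j (by omega) (by omega)
          rw [Finset.sum_range_one, h0 (T + j) (by omega) (by omega), zero_mul, add_zero,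
            h0 j (by omega) (by omega), zero_add, one_mul] at h
          exact h.symm
    have h := hg.2 i hiδ hi
    rw [hpar, hsum, Finset.sum_eq_zero (s := range δ) (fun ℓ hℓ => by
        rw [htail ℓ (mem_range.1 hℓ), mul_zero]), add_zero] at h
    exact h.symm

/-- A burst contained in the data part `{0, …, T-1}`: a sequence satisfying the parity relations
and supported on the burst is determined by its entries in residue classes `≥ B - N` modulo `B`,
since the burst meets each residue class once. -/
lemma data_burst {L : Type*} [Field L] {N B T a δ : ℕ} (x y : ℕ → L)
    (hN : 1 ≤ N) (hNB : N ≤ B) (hT : T = a * B + δ) (hδlt : δ < B - N)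
    {u : ℕ} (hu : u + B ≤ T) :
    ∃ S : Finset ℕ, S.card ≤ N ∧ ∀ g : ℕ → L, ParityRel N B T a δ x y g →
      (∀ j ≤ B + T - N, j < u ∨ u + B ≤ j → g j = 0) → (∀ j ∈ S, g j = 0) →
      ∀ j ≤ B + T - N, g j = 0 := by
  have hB : 0 < B := by omega
  refine ⟨(Ico u (u + B)).filter (fun q => B - N ≤ q % B), ?_, ?_⟩
  · rw [Nat.filter_Ico_card_eq_of_periodic u B _ (fun q => by simp),
      Nat.count_eq_card_filter_range]
    refine (card_le_card (t := Ico (B - N) B) fun q hq => ?_).trans ?_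
    · rw [mem_filter, mem_range] at hq
      rw [Nat.mod_eq_of_lt hq.1] at hq
      exact mem_Ico.2 ⟨hq.2, hq.1⟩
    · rw [Nat.card_Ico]; omega
  · intro g hg h0 hS
    have hdm : ∀ q : ℕ, q % B + q / B * B = q := fun q => by
      rw [mul_comm]; exact Nat.mod_add_div q B
    have hlt : ∀ q : ℕ, q % B < B := fun q => Nat.mod_lt q hB
    -- Within a residue class, only the position in the burst can be nonzero.
    have hother : ∀ q, u ≤ q → q < u + B → ∀ ℓ, ℓ ≤ a → q % B + ℓ * B < T →
        ℓ ≠ q / B → g (q % B + ℓ * B) = 0 := by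
      intro q hq1 hq2 ℓ hℓ hlT hne
      have h1 := hdm q
      refine h0 _ (by omega) ?_
      rcases lt_or_gt_of_ne hne with h | h
      · have := block_le (B := B) h; omega
      · have := block_le (B := B) h; omega
    have hlow : ∀ q, u ≤ q → q < u + B → q % B < δ → g q = 0 := by
      intro q hq1 hq2 hr
      have h := hg.1 (q % B) hr
      have h1 := hdm q
      have hqa : q / B ≤ a := by
        by_contra hcon
        have := block_le (B := B) (not_le.1 hcon)
        omega
      rw [h0 (T + q % B) (by omega) (by omega),
        Finset.sum_eq_single_of_mem (q / B) (mem_range.2 (by omega)), hdm] at h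
      · exact h.symm
      · intro ℓ hℓ hne
        rw [mem_range] at hℓ
        have h2 : ℓ * B ≤ a * B := Nat.mul_le_mul_right B (by omega)
        exact hother q hq1 hq2 ℓ (by omega) (by omega) hne
    have htail : ∀ ℓ < δ, g (a * B + ℓ) = 0 := by
      intro ℓ hℓ
      by_cases hin : u ≤ a * B + ℓ ∧ a * B + ℓ < u + B
      · refine hlow _ hin.1 hin.2 ?_
        rw [add_comm, Nat.add_mul_mod_self_right, Nat.mod_eq_of_lt (by omega)]
        exact hℓ
      · exact h0 _ (by omega) (by omega)
    intro q hq
    by_cases hin : u ≤ q ∧ q < u + B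
    · rcases lt_or_ge (q % B) δ with hr | hr
      · exact hlow q hin.1 hin.2 hr
      rcases lt_or_ge (q % B) (B - N) with hr2 | hr2
      · have h := hg.2 (q % B) hr hr2
        have h1 := hdm q
        have hqa : q / B < a := by
          by_contra hcon
          have := Nat.mul_le_mul_right B (not_lt.1 hcon)
          omega
        rw [h0 (T + q % B) (by omega) (by omega),
          Finset.sum_eq_single_of_mem (q / B) (mem_range.2 hqa), hdm,
          Finset.sum_eq_zero (s := range δ) (fun ℓ hℓ => by
            rw [htail ℓ (mem_range.1 hℓ), mul_zero]), add_zero] at h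
        · exact h.symm
        · intro ℓ hℓ hne
          rw [mem_range] at hℓ
          have := block_le (B := B) hℓ
          have := hlt q
          exact hother q hin.1 hin.2 ℓ (by omega) (by omega) hne
      · exact hS q (by rw [mem_filter, mem_Ico]; exact ⟨hin, hr2⟩)
    · exact h0 q hq (by omega)

/-- A burst `{u, …, u+B-1}` reaching into the parity part but leaving `c_{n-1}` unerased: the
parities `j ≥ d = u + B - T` survive. Those with `j < δ` give entries of the last block directly,
the next ones form a Cauchy system for that block, and those with `j ≥ d + δ` then give entries of
the preceding block. The set `S` consists of the erased entries not obtained in this way. -/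
lemma parity_burst {L : Type*} [Field L] {N B T a δ : ℕ} (x y : ℕ → L)
    (hN : 1 ≤ N) (hT : T = a * B + δ) (ha : 1 ≤ a) (hδlt : δ < B - N)
    (hx : ∀ j ∈ Ico δ (B - N), ∀ j' ∈ Ico δ (B - N), j ≠ j' → x j ≠ x j')
    (hy : ∀ ℓ ∈ range δ, ∀ ℓ' ∈ range δ, ℓ ≠ ℓ' → y ℓ ≠ y ℓ')
    (hxy : ∀ j ∈ Ico δ (B - N), ∀ ℓ ∈ range δ, x j ≠ y ℓ)
    {u : ℕ} (hu : T < u + B) (huN : u + N ≤ T) :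
    ∃ S : Finset ℕ, S.card ≤ N ∧ ∀ g : ℕ → L, ParityRel N B T a δ x y g →
      (∀ j ≤ B + T - N, j < u ∨ u + B ≤ j → g j = 0) → (∀ j ∈ S, g j = 0) →
      ∀ j < T, g j = 0 := by
  have haB : B ≤ a * B := Nat.le_mul_of_pos_left B ha
  obtain ⟨d, hd⟩ : ∃ d, d = u + B - T := ⟨_, rfl⟩
  -- `s` is the first column of the Cauchy system
  obtain ⟨s, hs⟩ : ∃ s, s = min δ d - (min (B - N) (d + δ) - max δ d) := ⟨_, rfl⟩
  refine ⟨Ico (max u (a * B)) (a * B + s) ∪ Ico (a * B - B + max (B - N) (d + δ)) (a * B),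
    ?_, ?_⟩
  · refine (card_union_le _ _).trans ?_
    rw [Nat.card_Ico, Nat.card_Ico]
    omega
  · intro g hg h0 hS
    have hpar : ∀ j, d ≤ j → j < B - N → g (T + j) = 0 := fun j h1 h2 =>
      h0 _ (by omega) (by omega)
    have hident : ∀ j < δ, d ≤ j → g (a * B + j) = 0 := by
      intro j hj hdj
      have h := hg.1 j hj
      rw [hpar j hdj (by omega), Finset.sum_range_succ, Finset.sum_eq_zero, zero_add,
        add_comm] at h
      · exact h.symm
      · intro ℓ hℓ
        have := block_le (B := B) (mem_range.1 hℓ)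
        exact h0 _ (by omega) (by omega)
    have htail : ∀ ℓ < δ, g (a * B + ℓ) = 0 := by
      refine cauchy_range δ (B - N) (Ico (max δ d) (min (B - N) (d + δ)))
          (Ico s (min δ d)) x y (fun ℓ => g (a * B + ℓ)) ?_ ?_ hx hy hxy ?_ ?_ ?_
      · rw [Nat.card_Ico, Nat.card_Ico]; omega
      · intro j hj; rw [mem_Ico] at *; omega
      · intro j hj; rw [mem_Ico] at hj; rw [mem_range]; omega
      · intro ℓ hℓ hn
        rw [mem_Ico] at hn
        rcases lt_or_ge ℓ d with h1 | h1
        · rcases lt_or_ge (a * B + ℓ) u with h2 | h2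
          · exact h0 _ (by omega) (by omega)
          · refine hS _ (mem_union_left _ (mem_Ico.2 ⟨?_, ?_⟩)) <;> omega
        · exact hident ℓ hℓ h1
      · intro j hj
        rw [mem_Ico] at hj
        have h := hg.2 j (by omega) (by omega)
        rw [hpar j (by omega) (by omega), Finset.sum_eq_zero, zero_add] at h
        · exact h.symm
        · intro ℓ hℓ
          have := block_le (B := B) (mem_range.1 hℓ)
          exact h0 _ (by omega) (by omega)
    have hprev : ∀ j, d + δ ≤ j → j < B - N → g (a * B - B + j) = 0 := by
      intro j h1 h2
      obtain ⟨b, rfl⟩ : ∃ b, a = b + 1 := ⟨a - 1, by omega⟩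
      have h := hg.2 j (by omega) h2
      rw [hpar j (by omega) h2, Finset.sum_eq_zero (s := range δ) (fun ℓ hℓ => by
        rw [htail ℓ (mem_range.1 hℓ), mul_zero]), add_zero, Finset.sum_range_succ,
        Finset.sum_eq_zero, zero_add] at h
      · rw [Nat.succ_mul, Nat.add_sub_cancel, add_comm]
        exact h.symm
      · intro ℓ hℓ
        have := block_le (B := B) (mem_range.1 hℓ)
        rw [Nat.succ_mul] at hT
        exact h0 _ (by omega) (by omega)
    intro t ht
    rcases lt_or_ge t u with h1 | h1
    · exact h0 t (by omega) (by omega)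
    rcases lt_or_ge t (a * B) with h2 | h2
    · obtain ⟨j, rfl⟩ : ∃ j, t = a * B - B + j := ⟨t + B - a * B, by omega⟩
      rcases lt_or_ge j (B - N) with h3 | h3
      · exact hprev j (by omega) h3
      · refine hS _ (mem_union_right _ (mem_Ico.2 ⟨?_, ?_⟩)) <;> omega
    · obtain ⟨j, rfl⟩ : ∃ j, t = a * B + j := ⟨t - a * B, by omega⟩
      exact htail j (by omega)

/-- Whatever the burst of length `B`, the sequences satisfying the parity relations and supported
on it are determined by at most `N` entries. Equivalently, the unerased evaluation points together
with at most `N` further ones span everything. -/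
lemma burst_deficiency {L : Type*} [Field L] {N B T a δ : ℕ} (x y : ℕ → L)
    (hN : 1 ≤ N) (hNB : N ≤ B) (hT : T = a * B + δ) (ha : 1 ≤ a)
    (hδlt : δ < B - N)
    (hx : ∀ j ∈ Ico δ (B - N), ∀ j' ∈ Ico δ (B - N), j ≠ j' → x j ≠ x j')
    (hy : ∀ ℓ ∈ range δ, ∀ ℓ' ∈ range δ, ℓ ≠ ℓ' → y ℓ ≠ y ℓ')
    (hxy : ∀ j ∈ Ico δ (B - N), ∀ ℓ ∈ range δ, x j ≠ y ℓ)
    {u : ℕ} (hu : u + B ≤ B + T - N + 1) :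
    ∃ S : Finset ℕ, S.card ≤ N ∧ ∀ g : ℕ → L, ParityRel N B T a δ x y g →
      (∀ j ≤ B + T - N, j < u ∨ u + B ≤ j → g j = 0) → (∀ j ∈ S, g j = 0) →
      (∀ j < T, g j = 0) ∧ g (B + T - N) = 0 := by
  rcases le_or_gt (u + B) T with h | h
  · obtain ⟨S, hS, hS'⟩ := data_burst x y hN hNB hT hδlt h
    exact ⟨S, hS, fun g hg h0 h1 => ⟨fun j hj => hS' g hg h0 h1 j (by omega),
      hS' g hg h0 h1 _ le_rfl⟩⟩
  rcases le_or_gt (u + N) T with h' | h'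
  · obtain ⟨S, hS, hS'⟩ := parity_burst x y hN hT ha hδlt hx hy hxy h h'
    exact ⟨S, hS, fun g hg h0 h1 => ⟨hS' g hg h0 h1, h0 _ le_rfl (by omega)⟩⟩
  · refine ⟨insert (B + T - N) (Ico u T), ?_, ?_⟩
    · refine (card_insert_le _ _).trans ?_
      rw [Nat.card_Ico]; omega
    · intro g _ h0 h1
      refine ⟨fun j hj => ?_, h1 _ (mem_insert_self _ _)⟩
      rcases lt_or_ge j u with h2 | h2
      · exact h0 j (by omega) (by omega)
      · exact h1 j (mem_insert_of_mem (mem_Ico.2 ⟨h2, hj⟩))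

/-! ### Recoverability by duality -/

/-- A coordinate of a linear code is recoverable from `I` as soon as it vanishes on all codewords
vanishing on `I`. -/
lemma recoverable_of_zero {L : Type*} [Field L] (C : Submodule L (ℕ → L)) (i : ℕ) (I : Finset ℕ)
    (h : ∀ c ∈ C, (∀ j ∈ I, c j = 0) → c i = 0) : RecoverableFrom (C : Set (ℕ → L)) i I := by
  classical
  let ev : ℕ → C →ₗ[L] L := fun j => (LinearMap.proj j).comp C.subtype
  have h1 : ev i ∈ Submodule.span L (Set.range fun j : I => ev j) := by
    refine mem_span_of_iInf_ker_le_ker fun c hc => ?_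
    simp only [Submodule.mem_iInf, LinearMap.mem_ker] at hc ⊢
    exact h c c.2 fun j hj => hc ⟨j, hj⟩
  obtain ⟨w, hw⟩ := (Submodule.mem_span_range_iff_exists_fun L).1 h1
  refine ⟨fun j => if hj : j ∈ I then w ⟨j, hj⟩ else 0, fun c hc => ?_⟩
  have h2 := LinearMap.congr_fun hw ⟨c, hc⟩
  simp only [LinearMap.sum_apply, LinearMap.smul_apply, smul_eq_mul] at h2
  change _ = c i at h2
  rw [← h2, ← Finset.sum_coe_sort I]
  refine Finset.sum_congr rfl fun j _ => ?_
  simp [ev]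

/-- Construction B as a linear subspace. -/
def constructionBSubmodule {L : Type*} [Field L] (N B T a δ q : ℕ) (θ x y : ℕ → L) :
    Submodule L (ℕ → L) where
  carrier := ConstructionB N B T a δ q θ x y
  zero_mem' := ⟨0, by simp, by simp, by simp, by simp⟩
  add_mem' := by
    rintro c c' ⟨m, h1, h2, h3, h4⟩ ⟨m', h1', h2', h3', h4'⟩
    refine ⟨m + m', fun j hj => ?_, ?_, fun j hj => ?_, fun j hj hj' => ?_⟩
    · simp [h1 j hj, h1' j hj, add_mul, Finset.sum_add_distrib]
    · simp [h2, h2', add_mul, Finset.sum_add_distrib]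
    · simp [h3 j hj, h3' j hj, Finset.sum_add_distrib]
    · simp only [Pi.add_apply, h4 j hj hj', h4' j hj hj', Finset.sum_add_distrib, mul_add]
      ring
  smul_mem' := by
    rintro r c ⟨m, h1, h2, h3, h4⟩
    refine ⟨r • m, fun j hj => ?_, ?_, fun j hj => ?_, fun j hj hj' => ?_⟩
    · simp [h1 j hj, mul_assoc, Finset.mul_sum]
    · simp [h2, mul_assoc, Finset.mul_sum]
    · simp [h3 j hj, Finset.mul_sum]
    · simp only [Pi.smul_apply, smul_eq_mul, h4 j hj hj', Finset.mul_sum, mul_add]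
      congr 1
      exact Finset.sum_congr rfl fun _ _ => by ring

/-! ### Linearized polynomials and evaluation points -/

/-- A nonzero linearized polynomial of `q`-degree `< k` has a kernel of `K`-dimension `< k`;
hence it vanishes identically if it vanishes on a subspace of dimension at least `k`. -/
lemma linearized_eq_zero {L : Type*} [Field L] [Fintype L] (K : Subfield L) {q k : ℕ}
    (hq1 : 1 < q) (hcardK : Nat.card K = q) (m : Fin k → L) (W : Submodule K L)
    (hW : k ≤ Module.finrank K W)
    (h0 : ∀ w ∈ W, ∑ i, m i * w ^ q ^ (i : ℕ) = 0) (z : L) :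
    ∑ i, m i * z ^ q ^ (i : ℕ) = 0 := by
  classical
  let P : Polynomial L := ∑ i, Polynomial.C (m i) * Polynomial.X ^ q ^ (i : ℕ)
  have heval : ∀ w, P.eval w = ∑ i, m i * w ^ q ^ (i : ℕ) := fun w => by
    simp [P, Polynomial.eval_finsetSum]
  rw [← heval]
  suffices hP : P = 0 by rw [hP, Polynomial.eval_zero]
  have hcardW : (univ.filter (fun w : L => w ∈ W)).card = q ^ Module.finrank K W := by
    rw [← Fintype.card_subtype, ← Nat.card_eq_fintype_card, ← hcardK]
    exact Module.natCard_eq_pow_finrank (K := K) (V := W)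
  refine Polynomial.eq_zero_of_natDegree_lt_card_of_eval_eq_zero' P
    (univ.filter (fun w : L => w ∈ W)) (fun w hw => ?_) ?_
  · rw [heval]; exact h0 w (mem_filter.1 hw).2
  · rw [hcardW]
    refine lt_of_lt_of_le ?_ (Nat.pow_le_pow_right (by omega) hW)
    have hpos : 0 < q ^ k := Nat.pow_pos (by omega)
    have hdeg : P.natDegree ≤ q ^ k - 1 := by
      refine Polynomial.natDegree_sum_le_of_forall_le _ _ fun i _ => ?_
      refine (Polynomial.natDegree_C_mul_X_pow_le _ _).trans ?_
      have := Nat.pow_lt_pow_right hq1 i.2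
      omega
    omega

/-- The evaluation points of all coordinates: coordinate `j ≤ B + T - N` of a codeword is the value
of its linearized polynomial at `evalPoint j`. -/
def evalPoint {L : Type*} [Field L] (N B T a δ : ℕ) (θ x y : ℕ → L) (j : ℕ) : L :=
  if j < T then θ j
  else if j - T < δ then ∑ ℓ ∈ range (a + 1), θ (j - T + ℓ * B)
  else if j - T < B - N then
    (∑ ℓ ∈ range a, θ (j - T + ℓ * B)) + ∑ ℓ ∈ range δ, (x (j - T) - y ℓ)⁻¹ * θ (a * B + ℓ)
  else θ T

lemma evalPoint_data {L : Type*} [Field L] {N B T a δ : ℕ} (θ x y : ℕ → L) {j : ℕ} (hj : j < T) :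
    evalPoint N B T a δ θ x y j = θ j := if_pos hj

lemma evalPoint_last {L : Type*} [Field L] {N B T a δ : ℕ} (θ x y : ℕ → L) (hδlt : δ < B - N) :
    evalPoint N B T a δ θ x y (B + T - N) = θ T := by
  unfold evalPoint
  rw [if_neg (by omega), if_neg (by omega), if_neg (by omega)]

lemma evalPoint_parity {L : Type*} [Field L] {N B T a δ : ℕ} (θ x y : ℕ → L)
    (hT : T = a * B + δ) :
    ParityRel N B T a δ x y (evalPoint N B T a δ θ x y) := by
  refine ⟨fun j hj => ?_, fun j hj hj' => ?_⟩
  · rw [evalPoint, if_neg (by omega), if_pos (by omega), Nat.add_sub_cancel_left]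
    refine Finset.sum_congr rfl fun ℓ hℓ => (evalPoint_data θ x y ?_).symm
    have := Nat.mul_le_mul_right B (Nat.lt_succ_iff.1 (mem_range.1 hℓ))
    omega
  · rw [evalPoint, if_neg (by omega), if_neg (by omega), if_pos (by omega),
      Nat.add_sub_cancel_left]
    congr 1
    · refine Finset.sum_congr rfl fun ℓ hℓ => (evalPoint_data θ x y ?_).symm
      have := block_le (B := B) (mem_range.1 hℓ)
      omega
    · refine Finset.sum_congr rfl fun ℓ hℓ => ?_
      rw [evalPoint_data θ x y (by rw [mem_range] at hℓ; omega)]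

/-- The parity relations have coefficients in `K`, so they are preserved by `K`-linear maps. -/
lemma ParityRel.map {L : Type*} [Field L] {N B T a δ : ℕ} {x y g : ℕ → L} (K : Subfield L)
    (hxK : ∀ j, x j ∈ K) (hyK : ∀ ℓ, y ℓ ∈ K) (hg : ParityRel N B T a δ x y g)
    (F : L →ₗ[K] L) : ParityRel N B T a δ x y (fun j => F (g j)) := by
  refine ⟨fun j hj => ?_, fun j hj hj' => ?_⟩
  · simp only [hg.1 j hj, map_sum]
  · simp only [hg.2 j hj hj', map_add, map_sum]
    congr 1
    refine Finset.sum_congr rfl fun ℓ _ => ?_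
    exact F.map_smul (⟨(x j - y ℓ)⁻¹, K.inv_mem (K.sub_mem (hxK j) (hyK ℓ))⟩ : K) _

/-- For every burst of length `B`, the unerased evaluation points span a `K`-subspace of dimension
at least `k = T - N + 1`. -/
lemma unerased_finrank {L : Type*} [Field L] [Fintype L] {N B T a δ : ℕ} (K : Subfield L)
    (θ x y : ℕ → L) (hN : 1 ≤ N) (hNB : N ≤ B) (hT : T = a * B + δ) (ha : 1 ≤ a)
    (hδlt : δ < B - N) (hxK : ∀ j, x j ∈ K) (hyK : ∀ ℓ, y ℓ ∈ K)
    (hx : ∀ j ∈ Ico δ (B - N), ∀ j' ∈ Ico δ (B - N), j ≠ j' → x j ≠ x j')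
    (hy : ∀ ℓ ∈ range δ, ∀ ℓ' ∈ range δ, ℓ ≠ ℓ' → y ℓ ≠ y ℓ')
    (hxy : ∀ j ∈ Ico δ (B - N), ∀ ℓ ∈ range δ, x j ≠ y ℓ)
    (hθ : ∀ coeffs : ℕ → L, (∀ j, coeffs j ∈ K) →
      (∑ j ∈ Finset.range (T + 1), coeffs j * θ j = 0) → ∀ j < T + 1, coeffs j = 0)
    {u : ℕ} (hu : u + B ≤ B + T - N + 1) :
    T - N + 1 ≤ Module.finrank K (Submodule.span K
      (evalPoint N B T a δ θ x y '' {j | j ≤ B + T - N ∧ (j < u ∨ u + B ≤ j)})) := by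
  classical
  set φ := evalPoint N B T a δ θ x y with hφ
  set J : Set ℕ := {j | j ≤ B + T - N ∧ (j < u ∨ u + B ≤ j)} with hJ
  obtain ⟨S, hScard, hS⟩ := burst_deficiency x y hN hNB hT ha hδlt hx hy hxy hu
  have hmem : ∀ j < T + 1, θ j ∈
      Submodule.span K (φ '' J) ⊔ Submodule.span K ((S.image φ : Finset L) : Set L) := by
    intro j hj
    by_contra hnot
    -- A `K`-linear functional vanishing on the span but not at `θ j` gives a sequence
    -- contradicting the choice of `S`.
    obtain ⟨ψ, hψ, hker⟩ := Submodule.exists_le_ker_of_notMem hnot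
    rw [sup_le_iff, Submodule.span_le, Submodule.span_le] at hker
    have h := hS _ ((evalPoint_parity θ x y hT).map K hxK hyK
        ((Algebra.linearMap K L).comp ψ)) (fun j hj hj' => ?_) (fun j hj => ?_)
    · apply hψ
      rw [← map_eq_zero (algebraMap K L)]
      rcases Nat.lt_succ_iff_lt_or_eq.1 hj with h1 | rfl
      · have := h.1 j h1
        rwa [evalPoint_data θ x y h1] at this
      · have := h.2
        rwa [evalPoint_last θ x y hδlt] at this
    · have : ψ (φ j) = 0 := hker.1 ⟨j, ⟨hj, hj'⟩, rfl⟩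
      simp [← hφ, this]
    · have : ψ (φ j) = 0 := hker.2 (mem_coe.2 (mem_image_of_mem _ hj))
      simp [← hφ, this]
  have hli : LinearIndependent K (fun j : Fin (T + 1) => θ j) := by
    rw [Fintype.linearIndependent_iff]
    intro g hg j
    have h := hθ (fun n => if hn : n < T + 1 then (g ⟨n, hn⟩ : L) else 0)
      (fun n => by split_ifs; exacts [(g _).2, K.zero_mem]) (by
        rw [Finset.sum_range, ← hg]
        refine Finset.sum_congr rfl fun n _ => ?_
        rw [dif_pos n.2]
        rfl) j j.2
    rw [dif_pos j.2] at h
    exact_mod_cast h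
  have h1 : T + 1 ≤ Module.finrank K
      (Submodule.span K (φ '' J) ⊔ Submodule.span K ((S.image φ : Finset L) : Set L) :
        Submodule K L) := by
    have h2 := finrank_span_eq_card hli
    rw [Fintype.card_fin] at h2
    rw [← h2]
    refine Submodule.finrank_mono (Submodule.span_le.2 ?_)
    rintro _ ⟨j, rfl⟩
    exact hmem j j.2
  have h2 := Submodule.finrank_add_le_finrank_add_finrank (Submodule.span K (φ '' J))
    (Submodule.span K ((S.image φ : Finset L) : Set L))
  have h3 := finrank_span_finset_le_card (R := K) (S.image φ)
  have h4 := card_image_le (s := S) (f := φ)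
  have haB : B ≤ a * B := Nat.le_mul_of_pos_left B ha
  unfold Set.finrank at h3
  omega

/-- The linearized polynomial with coefficients `m`, as a `K`-linear map. -/
def linearizedMap {L : Type*} [Field L] [Fintype L] (K : Subfield L) (p e k : ℕ) [CharP L p]
    [Fact p.Prime] (hcardK : Nat.card K = p ^ e) (m : Fin k → L) : L →ₗ[K] L where
  toFun z := ∑ i, m i * z ^ (p ^ e) ^ (i : ℕ)
  map_add' z w := by
    simp only [← pow_mul, add_pow_char_pow, mul_add, Finset.sum_add_distrib]
  map_smul' r z := by
    classical
    have hr : ∀ n, (r : L) ^ (p ^ e) ^ n = r := fun n => by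
      have h := FiniteField.pow_card_pow n r
      rw [← Nat.card_eq_fintype_card, hcardK] at h
      exact_mod_cast congrArg (Subtype.val) h
    change ∑ i, m i * ((r : L) * z) ^ (p ^ e) ^ (i : ℕ) = (r : L) * _
    rw [Finset.mul_sum]
    refine Finset.sum_congr rfl fun i _ => ?_
    rw [mul_pow, hr]
    ring

/-!
Construction-B burst-erasure recovery in the case `δ < B - N` (Appendix A): with
`Δ_i = min (i+T) (n-1)`, `n = B + T - N + 1`, every coordinate `i ∈ {0,…,n-1}` is
recoverable from `{0,…,Δ_i} \ [u,v]` for every interval `[u,v] ⊆ {0,…,n-1}` with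
`v - u + 1 ≤ B`; i.e. Construction B corrects any erasure burst of length at most `B`
with decoding delay at most `T`.
-/

theorem constructionB_burst_recovery_delta_lt
    {L : Type*} [Field L] [Fintype L]
    (p e m N B T a δ : ℕ) (hp : p.Prime) (he : 1 ≤ e)
    (hN : 1 ≤ N) (hNB : N ≤ B) (hBT : B ≤ T)
    (hδ1 : 1 ≤ δ) (hδB : δ ≤ B) (hT : T = a * B + δ)
    (hq : max 2 (B - N) ≤ p ^ e) (hm : T + 1 ≤ m)
    (K : Subfield L) (hcardK : Nat.card K = p ^ e)
    (hcardL : Fintype.card L = (p ^ e) ^ m)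
    -- the evaluation points `θ_0, …, θ_T` are linearly independent over `K`
    (θ : ℕ → L)
    (hθ : ∀ coeffs : ℕ → L, (∀ j, coeffs j ∈ K) →
      (∑ j ∈ Finset.range (T + 1), coeffs j * θ j = 0) → ∀ j < T + 1, coeffs j = 0)
    -- `γ_{j,ℓ} = (x_j - y_ℓ)⁻¹` is a Cauchy matrix over `K`: the `x_j` (for
    -- `δ' ≤ j ≤ B-N-1`) and `y_ℓ` (for `0 ≤ ℓ ≤ δ-1`) are pairwise distinct elements of `K`
    (x y : ℕ → L) (hxK : ∀ j, x j ∈ K) (hyK : ∀ ℓ, y ℓ ∈ K)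
    (hxinj : ∀ j ∈ Finset.Ico (min δ (B - N)) (B - N), ∀ j' ∈ Finset.Ico (min δ (B - N)) (B - N),
      j ≠ j' → x j ≠ x j')
    (hyinj : ∀ ℓ ∈ Finset.range δ, ∀ ℓ' ∈ Finset.range δ, ℓ ≠ ℓ' → y ℓ ≠ y ℓ')
    (hxy : ∀ j ∈ Finset.Ico (min δ (B - N)) (B - N), ∀ ℓ ∈ Finset.range δ, x j ≠ y ℓ)
    (hδlt : δ < B - N)
    (i : ℕ) (hi : i ≤ B + T - N)
    (u v : ℕ) (huv : u ≤ v) (hv : v ≤ B + T - N) (hburst : v - u + 1 ≤ B) :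
    RecoverableFrom (ConstructionB N B T a δ (p ^ e) θ x y) i
      (Finset.range (min (i + T) (B + T - N) + 1) \ Finset.Icc u v) := by
  classical
  have hFact : Fact p.Prime := ⟨hp⟩
  rw [← pow_mul] at hcardL
  have hchar : CharP L p := charP_of_card_eq_prime_pow hcardL
  rw [min_eq_left hδlt.le] at hxinj hxy
  have ha : 1 ≤ a := by
    rcases Nat.eq_zero_or_pos a with rfl | h
    · omega
    · exact h
  refine recoverable_of_zero (constructionBSubmodule N B T a δ (p ^ e) θ x y) i _ ?_
  rintro c ⟨μ, h1, h2, h3, h4⟩ h0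
  rw [min_eq_left hδlt.le] at h3 h4
  have hpar : ParityRel N B T a δ x y c := ⟨h3, h4⟩
  by_cases hin : u ≤ i ∧ i ≤ v
  swap
  · exact h0 i (by rw [mem_sdiff, mem_range, mem_Icc]; omega)
  rcases lt_or_ge i (B - N) with hiB | hiB
  · refine early_symbol_zero x y c hN hδ1 hT ha hxinj hyinj hxy hpar hiB hin.1 hin.2 (by omega)
      fun j hj hj' => h0 j ?_
    rw [mem_sdiff, mem_range, mem_Icc]
    omega
  · let F := linearizedMap K p e _ hcardK μ
    have hparF : ParityRel N B T a δ x y (fun j => F (evalPoint N B T a δ θ x y j)) :=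
      (evalPoint_parity θ x y hT).map K hxK hyK F
    have hdata : ∀ j < T, c j = F (evalPoint N B T a δ θ x y j) := fun j hj => by
      rw [evalPoint_data θ x y hj]; exact h1 j hj
    have hc : ∀ j ≤ B + T - N, c j = F (evalPoint N B T a δ θ x y j) := by
      intro j hj
      rcases lt_or_ge j T with hjT | hjT
      · exact hdata j hjT
      obtain ⟨t, rfl⟩ := Nat.exists_eq_add_of_le hjT
      rcases lt_or_ge t δ with ht | ht
      · refine (h3 t ht).trans (Eq.trans ?_ (hparF.1 t ht).symm)
        refine Finset.sum_congr rfl fun ℓ hℓ => hdata _ ?_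
        have := Nat.mul_le_mul_right B (Nat.lt_succ_iff.1 (mem_range.1 hℓ))
        omega
      rcases lt_or_ge t (B - N) with ht' | ht'
      · refine (h4 t ht ht').trans (Eq.trans ?_ (hparF.2 t ht ht').symm)
        congr 1
        · refine Finset.sum_congr rfl fun ℓ hℓ => hdata _ ?_
          have := block_le (B := B) (mem_range.1 hℓ)
          omega
        · refine Finset.sum_congr rfl fun ℓ hℓ => ?_
          rw [hdata _ (by rw [mem_range] at hℓ; omega)]
      · have : T + t = B + T - N := by omega
        rw [this, evalPoint_last θ x y hδlt]
        exact h2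
    -- Enlarge the burst to length exactly `B` inside `{0, …, n-1}`.
    have hdim := unerased_finrank K θ x y hN hNB hT ha hδlt hxK hyK hxinj hyinj hxy hθ
      (u := min u (T - N + 1)) (by omega)
    rw [hc i hi]
    refine linearized_eq_zero K ((by omega : 1 < max 2 (B - N)).trans_le hq) hcardK μ _ hdim
      (fun w hw => ?_) _
    have hle : Submodule.span K (evalPoint N B T a δ θ x y ''
        {j | j ≤ B + T - N ∧ (j < min u (T - N + 1) ∨ min u (T - N + 1) + B ≤ j)}) ≤
        LinearMap.ker F := by
      rw [Submodule.span_le]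
      rintro _ ⟨j, ⟨hj, hj'⟩, rfl⟩
      refine (hc j hj).symm.trans (h0 j ?_)
      rw [mem_sdiff, mem_range, mem_Icc]
      omega
    exact hle hw
end

section
/- Determinant nonvanishing with one entry outside the base field: Let K ⊆ L be a field extension, let M be an m×m matrix with entries in L, and let (r₀, c₀) be an index pair such that M_{r,c} ∈ K for all (r,c) ≠ (r₀, c₀) and M_{r₀,c₀} ∉ K. If the (m−1)×(m−1) submatrix of M obtained by deleting row r₀ and column c₀ has nonzero determinant, then det M ≠ 0. -/
/-!
Laplace expansion along row `r₀` reads `det M = ± M r₀ c₀ * d + s`, where `d` is the minor at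
`(r₀, c₀)` and `s` collects the terms of the other columns. No minor along row `r₀` involves the
entry `M r₀ c₀`, so `d` and `s` lie in `K`. If `det M = 0` then, as `d ≠ 0`, the entry
`M r₀ c₀ = ∓ s / d` would lie in `K`.
-/

theorem det_mem_subfield {L n : Type*} [Field L] [Fintype n] [DecidableEq n] (K : Subfield L)
    (A : Matrix n n L) (hA : ∀ i j, A i j ∈ K) : A.det ∈ K := by
  rw [Matrix.det_apply']
  exact sum_mem fun σ _ => mul_mem (intCast_mem K _) (prod_mem fun i _ => hA _ _)

theorem det_ne_zero_of_single_entry_outside_subfield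
    {L : Type*} [Field L] (K : Subfield L) (m : ℕ)
    (M : Matrix (Fin (m + 1)) (Fin (m + 1)) L) (r₀ c₀ : Fin (m + 1))
    (hin : ∀ r c, (r, c) ≠ (r₀, c₀) → M r c ∈ K)
    (hout : M r₀ c₀ ∉ K)
    (hminor : (M.submatrix r₀.succAbove c₀.succAbove).det ≠ 0) :
    M.det ≠ 0 := by
  intro h0
  have hd : ∀ j : Fin (m + 1), (M.submatrix r₀.succAbove j.succAbove).det ∈ K := fun j =>
    det_mem_subfield K _ fun a b => hin _ _ fun h =>
      Fin.succAbove_ne r₀ a (Prod.ext_iff.1 h).1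
  have hsign : ∀ k : ℕ, (-1 : L) ^ k ∈ K := fun k => pow_mem (neg_mem (one_mem K)) k
  rw [Matrix.det_succ_row M r₀, Fin.sum_univ_succAbove _ c₀] at h0
  have hs : ∑ i : Fin m, (-1 : L) ^ (r₀ + c₀.succAbove i : ℕ) * M r₀ (c₀.succAbove i) *
      (M.submatrix r₀.succAbove (c₀.succAbove i).succAbove).det ∈ K :=
    sum_mem fun i _ => mul_mem (mul_mem (hsign _)
      (hin _ _ fun h => Fin.succAbove_ne c₀ i (Prod.ext_iff.1 h).2)) (hd _)
  have hne : (-1 : L) ^ (r₀ + c₀ : ℕ) ≠ 0 := pow_ne_zero _ (neg_ne_zero.2 one_ne_zero)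
  have hmem := eq_neg_of_add_eq_zero_left h0 ▸ neg_mem hs
  apply hout
  convert div_mem hmem (mul_mem (hsign (r₀ + c₀)) (hd c₀)) using 1
  field_simp
end
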